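/- Let N ≥ 1, let p_1,...,p_N be reals with 0 ≤ p_1 ≤ ... ≤ p_N, let L ≥ 0 and let k, l be real constants with k ≥ 1 and l ≥ 1. Define q_j = max(0, p_j − L), r_j = k·p_j + l·q_j, s_j(n,i) = p_j·n − q_j·i + c_j for arbitrary reals c_j, and the Type II function f̃^n_i equal to the ultradiscrete permanent of the N×N matrix whose (j,m) entry (m = 1,...,N) is |s_j(n,i) + (−N−1+2m)·r_j/2|. Then for all real n, i: f̃^n_i + f̃^{n+k−1}_{i−l−1} = max( f̃^{n+k−1}_{i−l} + f̃^n_{i−1}, f̃^{n+k}_{i−l} + f̃^{n−1}_{i−1} − 2L ). -/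

import Mathlib

open Finset

/-- The ultradiscrete permanent of an `N × N` real matrix:
the maximum over all permutations `π` of `Σ_j a j (π j)`. -/
noncomputable def uperm (N : ℕ) (a : Fin N → Fin N → ℝ) : ℝ :=
  Finset.univ.sup' Finset.univ_nonempty fun π : Equiv.Perm (Fin N) => ∑ j, a j (π j)

/-!
Absolute values are maxima over signs, and the maximum over permutations of a sum of products with
centred ranks is a quarter of the sum of all distances. So the Type II function is a maximum, over
sign vectors, of a quadratic energy whose kernel is `min (r i) (r j)`. By polarization, the energy
of a pair of sign vectors splits into a part carried by the set where the two agree and a part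
carried by the set `D` where they are opposite; only the second part distinguishes the three
products in the bilinear equation, through the difference of the two arguments.

When `p` is sorted, summation by parts turns the energy of a vector on `D` into a sum of
independent concave parabolas in its tail sums, whose parity is fixed by `D`. Each is maximal at `0`
or `1`, so a single alternating vector is optimal for the differences `r - (p - q)` and
`r - (p + q)` alike. For the difference `r + (p - q)`, the reflection `e ↦ 2 δ_t - e`, with `t` the
largest element of `D`, leads back to `r - (p - q)` at the price `2 (p t - q t)`. This price is
`2 L` if `L ≤ p t`; otherwise `q` vanishes on `D`, and the first two differences give equal
energies.
-/

namespace UltradiscreteToda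

open scoped Matrix

section Rearrangement

lemma sum_sign_sub {N : ℕ} (a : Fin N) :
    ∑ b : Fin N, (SignType.sign ((a : ℝ) - b) : ℝ) = 2 * (a : ℝ) - N + 1 := by
  have hsign (b : Fin N) : (SignType.sign ((a : ℝ) - b) : ℝ) =
      (if b < a then 1 else 0) - (if a < b then 1 else 0) := by
    rcases lt_trichotomy a b with h | rfl | h
    · simp [h, h.not_gt]
    · simp
    · simp [h, h.not_gt]
  have hIio : univ.filter (· < a) = Iio a := by ext; simp
  have hIoi : univ.filter (a < ·) = Ioi a := by ext; simp
  simp only [hsign, sum_sub_distrib, sum_boole, hIio, hIoi, Fin.card_Iio, Fin.card_Ioi,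
    Nat.sub_sub, Nat.cast_sub (show 1 + (a : ℕ) ≤ N by omega)]
  push_cast
  ring

lemma sum_mul_rank {N : ℕ} (y : Fin N → ℝ) (π : Equiv.Perm (Fin N)) :
    ∑ j, y j * ((2 * (π j : ℝ) - N + 1) / 2) =
      (∑ i, ∑ j, (y i - y j) * SignType.sign ((π i : ℝ) - π j)) / 4 := by
  have hrow : ∑ i, ∑ j, y i * (SignType.sign ((π i : ℝ) - π j) : ℝ) =
      ∑ i, y i * (2 * (π i : ℝ) - N + 1) := by
    refine sum_congr rfl fun i _ => ?_
    rw [← mul_sum, Equiv.sum_comp π fun b => (SignType.sign ((π i : ℝ) - b) : ℝ), sum_sign_sub]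
  have hcol : ∑ i, ∑ j, y j * (SignType.sign ((π i : ℝ) - π j) : ℝ) =
      -∑ i, ∑ j, y i * (SignType.sign ((π i : ℝ) - π j) : ℝ) := by
    rw [sum_comm]
    simp only [← sum_neg_distrib, ← mul_neg, ← SignType.coe_neg, ← Left.sign_neg, neg_sub]
  simp only [sub_mul, sum_sub_distrib, hcol, hrow, ← mul_div_assoc, ← sum_div]
  ring

lemma sum_mul_rank_le {N : ℕ} (y : Fin N → ℝ) (π : Equiv.Perm (Fin N)) :
    ∑ j, y j * ((2 * (π j : ℝ) - N + 1) / 2) ≤ (∑ i, ∑ j, |y i - y j|) / 4 := by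
  rw [sum_mul_rank]
  gcongr with i _ j _
  refine (le_abs_self _).trans ?_
  rw [abs_mul]
  refine mul_le_of_le_one_right (abs_nonneg _) ?_
  cases SignType.sign ((π i : ℝ) - π j) <;> simp

lemma exists_sum_mul_rank_eq {N : ℕ} (y : Fin N → ℝ) : ∃ π : Equiv.Perm (Fin N),
    ∑ j, y j * ((2 * (π j : ℝ) - N + 1) / 2) = (∑ i, ∑ j, |y i - y j|) / 4 := by
  refine ⟨(Tuple.sort y)⁻¹, ?_⟩
  rw [sum_mul_rank]
  set π := (Tuple.sort y)⁻¹ with hπ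
  have hmono {i j : Fin N} (h : π i ≤ π j) : y i ≤ y j := by
    simpa [hπ] using Tuple.monotone_sort y h
  refine congrArg (· / 4) (sum_congr rfl fun i _ => sum_congr rfl fun j _ => ?_)
  rcases lt_trichotomy (π i) (π j) with h | h | h
  · simp [sign_neg (sub_neg.2 (Nat.cast_lt.2 h)), abs_of_nonpos (sub_nonpos.2 (hmono h.le))]
  · simp [π.injective h]
  · simp [sign_pos (sub_pos.2 (Nat.cast_lt.2 h)), abs_of_nonneg (sub_nonneg.2 (hmono h.le))]

end Rearrangement

section SignVector

variable {ι : Type*}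

/-- A vector of signs on the index set `D`, extended by `0` outside `D`. The signs are real so that
such vectors enter dot products without casts. -/
structure IsSignVector (D : Finset ι) (e : ι → ℝ) : Prop where
  eq_one_or_neg_one : ∀ j ∈ D, e j = 1 ∨ e j = -1
  eq_zero : ∀ j ∉ D, e j = 0

namespace IsSignVector

variable {D : Finset ι} {e e' : ι → ℝ}

lemma neg (he : IsSignVector D e) : IsSignVector D (-e) where
  eq_one_or_neg_one j hj := by simpa [neg_eq_iff_eq_neg, or_comm] using he.eq_one_or_neg_one j hj
  eq_zero j hj := by simp [he.eq_zero j hj]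

lemma modEq_two (he : IsSignVector D e) (he' : IsSignVector D e') (j : ι) :
    e j ≡ e' j [PMOD 2] := by
  rw [AddCommGroup.modEq_iff_zsmul]
  by_cases hj : j ∈ D
  · rcases he.eq_one_or_neg_one j hj with h | h <;>
      rcases he'.eq_one_or_neg_one j hj with h' | h' <;> rw [h, h']
    exacts [⟨0, by norm_num⟩, ⟨-1, by norm_num⟩, ⟨1, by norm_num⟩, ⟨0, by norm_num⟩]
  · exact ⟨0, by simp [he.eq_zero j hj, he'.eq_zero j hj]⟩

variable [Fintype ι] [DecidableEq ι]

lemma add_compl {α : ι → ℝ} (hα : IsSignVector Dᶜ α) (he : IsSignVector D e) :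
    IsSignVector univ (α + e) where
  eq_one_or_neg_one j _ := by
    by_cases hj : j ∈ D
    · simpa [hα.eq_zero j (by simpa)] using he.eq_one_or_neg_one j hj
    · simpa [he.eq_zero j hj] using hα.eq_one_or_neg_one j (by simpa)
  eq_zero j hj := absurd (mem_univ j) hj

lemma exists_eq_add_eq_sub {σ τ : ι → ℝ} (hσ : IsSignVector univ σ) (hτ : IsSignVector univ τ) :
    ∃ (D : Finset ι) (α e : ι → ℝ), IsSignVector Dᶜ α ∧ IsSignVector D e ∧
      σ = α + e ∧ τ = α - e := by
  have hvalue (j : ι) : (σ j = 1 ∨ σ j = -1) ∧ (τ j = 1 ∨ τ j = -1) :=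
    ⟨hσ.eq_one_or_neg_one j (mem_univ j), hτ.eq_one_or_neg_one j (mem_univ j)⟩
  refine ⟨({j | σ j ≠ τ j} : Finset ι), fun j => (σ j + τ j) / 2, fun j => (σ j - τ j) / 2,
    ⟨?_, ?_⟩, ⟨?_, ?_⟩, ?_, ?_⟩
  · intro j hj
    have hj : σ j = τ j := by simpa using hj
    simpa [hj] using (hvalue j).2
  · intro j hj
    have hj : σ j ≠ τ j := by simpa using hj
    grind
  · intro j hj
    have hj : σ j ≠ τ j := by simpa using hj
    grind
  · intro j hj
    have hj : σ j = τ j := by simpa using hj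
    simp [hj]
  · ext j
    simp only [Pi.add_apply]
    ring
  · ext j
    simp only [Pi.sub_apply]
    ring

end IsSignVector

end SignVector

section Energy

variable {ι : Type*}

/-- The matrix with entries `min (r i) (r j)`, the interaction of the indices in the energy. -/
def minKernel (r : ι → ℝ) : Matrix ι ι ℝ := .of fun i j => min (r i) (r j)

variable [Fintype ι]

/-- The energy of a sign vector `e` in the external field `z`. The Type II function maximizes it
over all sign vectors, for the field `2 x` and up to a factor and a constant. -/
noncomputable def energy (r z e : ι → ℝ) : ℝ := z ⬝ᵥ e - e ⬝ᵥ minKernel r *ᵥ e / 2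

lemma energy_add_energy_sub (r x y α e : ι → ℝ) :
    energy r ((2 : ℝ) • x) (α + e) + energy r ((2 : ℝ) • y) (α - e) =
      2 * (energy r (x + y) α + energy r (x - y) e) := by
  simp only [energy, Matrix.mulVec_add, Matrix.mulVec_sub, dotProduct_add, dotProduct_sub,
    add_dotProduct, sub_dotProduct, smul_dotProduct, smul_eq_mul]
  ring

lemma energy_single_sub [DecidableEq ι] {D : Finset ι} {r e : ι → ℝ} {t : ι}
    (he : IsSignVector D e) (ht : ∀ j ∈ D, r j ≤ r t) (d : ι → ℝ) :
    energy r (r + d) (Pi.single t 2 - e) = energy r (r - d) e + 2 * d t := by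
  have hrow : (minKernel r *ᵥ e) t = r ⬝ᵥ e := by
    refine sum_congr rfl fun j _ => ?_
    by_cases hj : j ∈ D
    · simp [minKernel, ht j hj]
    · simp [he.eq_zero j hj]
  have hcol : e ⬝ᵥ (minKernel r).col t = r ⬝ᵥ e := by
    rw [← hrow, dotProduct_comm]
    simp only [Matrix.mulVec, dotProduct, minKernel, Matrix.col_apply, Matrix.of_apply, min_comm]
  simp only [energy, Matrix.mulVec_sub, dotProduct_sub, sub_dotProduct, add_dotProduct,
    single_dotProduct, dotProduct_single, Matrix.mulVec_single, hrow, dotProduct_smul, hcol]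
  simp only [Pi.add_apply, MulOpposite.op_ofNat, minKernel, Matrix.col_apply, Matrix.of_apply,
    min_self, MulOpposite.smul_eq_mul_unop, MulOpposite.unop_ofNat]
  ring

lemma energy_two_smul_eq {r σ : ι → ℝ} (hr : 0 ≤ r) (hσ : IsSignVector univ σ)
    (x : ι → ℝ) :
    energy r ((2 : ℝ) • x) σ / 2 + (∑ i, ∑ j, max (r i) (r j)) / 4 =
      x ⬝ᵥ σ + (∑ i, ∑ j, |σ i * r i - σ j * r j|) / 4 := by
  have habs (i j : ι) : |σ i * r i - σ j * r j| =
      max (r i) (r j) - σ i * (min (r i) (r j) * σ j) := by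
    have hi := hr i
    have hj := hr j
    simp only [Pi.zero_apply] at hi hj
    rcases hσ.eq_one_or_neg_one i (mem_univ i) with hi' | hi' <;>
      rcases hσ.eq_one_or_neg_one j (mem_univ j) with hj' | hj' <;> rw [hi', hj'] <;>
      grind
  simp only [habs, sum_sub_distrib, energy, ← mul_sum, smul_dotProduct, smul_eq_mul]
  simp only [dotProduct, Matrix.mulVec, minKernel, Matrix.of_apply]
  ring

end Energy

section TypeII

variable {N : ℕ}

/-- The Type II function in terms of the vector `x` of phases `s_j(n, i)`: a translation of `(n, i)`
becomes a translation of `x`. As `m` counts from `0`, the factor `-N - 1 + 2m` reads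
`2m - N + 1`. -/
noncomputable def typeII (r x : Fin N → ℝ) : ℝ :=
  uperm N fun j m => |x j + (2 * ((m : ℕ) : ℝ) - (N : ℝ) + 1) * r j / 2|

lemma uperm_comp (a : Fin N → Fin N → ℝ) (ρ : Equiv.Perm (Fin N)) :
    uperm N (a ∘ ρ) = uperm N a := by
  refine le_antisymm (sup'_le _ _ fun π _ => ?_) (sup'_le _ _ fun π _ => ?_)
  · refine (Eq.le ?_).trans (le_sup' _ (mem_univ (π * ρ⁻¹)))
    rw [← Equiv.sum_comp ρ fun j => a j ((π * ρ⁻¹) j)]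
    simp
  · refine (Eq.le ?_).trans (le_sup' _ (mem_univ (π * ρ)))
    rw [← Equiv.sum_comp ρ]
    simp

lemma typeII_comp (r x : Fin N → ℝ) (ρ : Equiv.Perm (Fin N)) :
    typeII (r ∘ ρ) (x ∘ ρ) = typeII r x :=
  uperm_comp (fun j m => |x j + (2 * ((m : ℕ) : ℝ) - (N : ℝ) + 1) * r j / 2|) ρ

lemma energy_le_typeII {r : Fin N → ℝ} (hr : 0 ≤ r) (x : Fin N → ℝ) {σ : Fin N → ℝ}
    (hσ : IsSignVector univ σ) :
    energy r ((2 : ℝ) • x) σ / 2 + (∑ i, ∑ j, max (r i) (r j)) / 4 ≤ typeII r x := by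
  obtain ⟨π, hπ⟩ := exists_sum_mul_rank_eq fun j => σ j * r j
  rw [energy_two_smul_eq hr hσ, ← hπ, dotProduct, ← sum_add_distrib]
  refine (sum_le_sum fun j _ => ?_).trans (le_sup' (fun π : Equiv.Perm (Fin N) =>
    ∑ j, |x j + (2 * ((π j : ℕ) : ℝ) - (N : ℝ) + 1) * r j / 2|) (mem_univ π))
  rcases hσ.eq_one_or_neg_one j (mem_univ j) with h | h <;> rw [h]
  · exact (Eq.le (by ring)).trans (le_abs_self _)
  · exact (Eq.le (by ring)).trans (neg_le_abs _)

lemma exists_typeII_le_energy {r : Fin N → ℝ} (hr : 0 ≤ r) (x : Fin N → ℝ) :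
    ∃ σ, IsSignVector univ σ ∧
      typeII r x ≤ energy r ((2 : ℝ) • x) σ / 2 + (∑ i, ∑ j, max (r i) (r j)) / 4 := by
  obtain ⟨π, -, hπ⟩ := exists_mem_eq_sup' univ_nonempty fun π : Equiv.Perm (Fin N) =>
    ∑ j, |x j + (2 * ((π j : ℕ) : ℝ) - (N : ℝ) + 1) * r j / 2|
  have hsign (a : ℝ) : ∃ s : ℝ, (s = 1 ∨ s = -1) ∧ |a| = s * a := by
    rcases abs_choice a with h | h
    exacts [⟨1, .inl rfl, by rw [h, one_mul]⟩, ⟨-1, .inr rfl, by rw [h, neg_one_mul]⟩]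
  choose σ hσ habs using fun j => hsign (x j + (2 * ((π j : ℕ) : ℝ) - (N : ℝ) + 1) * r j / 2)
  have hσ : IsSignVector univ σ := ⟨fun j _ => hσ j, fun j hj => absurd (mem_univ j) hj⟩
  refine ⟨σ, hσ, ?_⟩
  rw [energy_two_smul_eq hr hσ]
  calc typeII r x = x ⬝ᵥ σ + ∑ j, σ j * r j * ((2 * (π j : ℝ) - N + 1) / 2) := by
        rw [typeII, uperm, hπ, dotProduct, ← sum_add_distrib]
        refine sum_congr rfl fun j _ => ?_
        rw [habs]
        ring
    _ ≤ _ := by gcongr; exact sum_mul_rank_le _ π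

lemma exists_sector {r : Fin N → ℝ} (hr : 0 ≤ r) (x y : Fin N → ℝ) :
    ∃ D e, IsSignVector D e ∧ ∀ x' y' e', x' + y' = x + y → IsSignVector D e' →
      typeII r x + typeII r y + energy r (x' - y') e' ≤
        typeII r x' + typeII r y' + energy r (x - y) e := by
  obtain ⟨σ, hσ, hx⟩ := exists_typeII_le_energy hr x
  obtain ⟨τ, hτ, hy⟩ := exists_typeII_le_energy hr y
  obtain ⟨D, α, e, hα, he, rfl, rfl⟩ := hσ.exists_eq_add_eq_sub hτ
  refine ⟨D, e, he, fun x' y' e' hsum he' => ?_⟩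
  have hx' := energy_le_typeII hr x' (hα.add_compl he')
  have hy' := energy_le_typeII hr y' (hα.add_compl he'.neg)
  have h := energy_add_energy_sub r x y α e
  have h' := energy_add_energy_sub r x' y' α e'
  rw [hsum] at h'
  rw [← sub_eq_add_neg] at hy'
  linarith

end TypeII

section Abel

variable {ι : Type*} [LinearOrder ι] [PredOrder ι]

open Classical in
/-- Backward differences, starting from the value itself at a minimal index; `sum_increment` is the
inverse operation. -/
noncomputable def increment : (ι → ℝ) →ₗ[ℝ] ι → ℝ where
  toFun a k := if IsMin k then a k else a k - a (Order.pred k)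
  map_add' a b := by
    ext k
    simp only [Pi.add_apply]
    split_ifs <;> ring
  map_smul' c a := by
    ext k
    simp only [Pi.smul_apply, smul_eq_mul, RingHom.id_apply]
    split_ifs <;> ring

lemma increment_nonneg {a : ι → ℝ} (ha : Monotone a) (ha0 : 0 ≤ a) : 0 ≤ increment a := by
  intro k
  simp only [increment, LinearMap.coe_mk, AddHom.coe_mk, Pi.zero_apply]
  split_ifs
  · exact ha0 k
  · exact sub_nonneg.2 (ha (Order.pred_le k))

variable [Fintype ι]

lemma sum_increment (a : ι → ℝ) (j : ι) : ∑ k with k ≤ j, increment a k = a j := by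
  induction j using WellFoundedLT.induction with
  | ind j ih =>
    by_cases hj : IsMin j
    · have hIic : univ.filter (· ≤ j) = {j} := by
        ext k; simpa using ⟨fun h => hj.eq_of_le h, le_of_eq⟩
      simp [hIic, increment, hj]
    · have hpred : Order.pred j < j := Order.pred_lt_of_not_isMin hj
      have hIic : univ.filter (· ≤ j) = insert j (univ.filter (· ≤ Order.pred j)) := by
        ext k; simp [le_iff_eq_or_lt (b := j), Order.le_pred_iff_of_not_isMin hj]
      rw [hIic, sum_insert (by simpa using hpred), ih _ hpred]
      simp [increment, hj]

/-- The sum of `e` over the indices from `k` on, dual to `increment` under summation by parts. -/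
def tailSum (e : ι → ℝ) (k : ι) : ℝ := ∑ j with k ≤ j, e j

lemma dotProduct_eq_sum_increment (a e : ι → ℝ) :
    a ⬝ᵥ e = ∑ k, increment a k * tailSum e k := by
  calc a ⬝ᵥ e = ∑ j, ∑ k with k ≤ j, increment a k * e j := by
        simp only [dotProduct, ← sum_mul, sum_increment]
    _ = ∑ k, ∑ j with k ≤ j, increment a k * e j := sum_comm' (by simp)
    _ = _ := by simp only [tailSum, mul_sum]

lemma dotProduct_minKernel_mulVec {r : ι → ℝ} (hr : Monotone r) (e : ι → ℝ) :
    e ⬝ᵥ minKernel r *ᵥ e = ∑ k, increment r k * tailSum e k ^ 2 := by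
  have hkernel (i j : ι) : minKernel r i j =
      ∑ k, increment r k * ((if k ≤ j then 1 else 0) * if k ≤ i then 1 else 0) := by
    rw [minKernel, Matrix.of_apply, ← hr.map_min, ← sum_increment r, sum_filter]
    simp only [le_min_iff, ite_and, mul_ite, mul_one, mul_zero]
  simp only [dotProduct, Matrix.mulVec, hkernel, tailSum, sum_filter, sq, sum_mul, mul_sum]
  rw [sum_comm_cycle]
  refine sum_congr rfl fun k _ => sum_congr rfl fun i _ => sum_congr rfl fun j _ => ?_
  split_ifs <;> ring

end Abel

section Parabola

lemma int_mul_add_mul_nonneg {a b : ℝ} (ha : 0 ≤ a) (hab : a ≤ b) (m : ℤ) :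
    0 ≤ m * (a + m * b) := by
  rcases le_or_gt 0 m with hm | hm
  · have hm : (0 : ℝ) ≤ m := mod_cast hm
    exact mul_nonneg hm (add_nonneg ha (mul_nonneg hm (ha.trans hab)))
  · have hm : (m : ℝ) ≤ -1 := mod_cast Int.le_sub_one_of_lt hm
    exact mul_nonneg_of_nonpos_of_nonpos (by linarith) (by nlinarith)

-- The vertex `b / R` lies in `[0, 1]`, so no integer of the parity of `T` is closer to it than `T`.
lemma parabola_le_of_modEq_two {b R S T : ℝ} (hb : 0 ≤ b) (hbR : b ≤ R)
    (hST : S ≡ T [PMOD 2]) (hT : T = 0 ∨ T = 1) :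
    b * S - R * S ^ 2 / 2 ≤ b * T - R * T ^ 2 / 2 := by
  obtain ⟨m, hm⟩ := AddCommGroup.modEq_iff_zsmul.1 hST
  obtain rfl : S = T - 2 * m := by rw [zsmul_eq_mul] at hm; linarith
  rcases hT with rfl | rfl
  · linear_combination 2 * int_mul_add_mul_nonneg hb hbR m
  · have hreflected := int_mul_add_mul_nonneg (sub_nonneg.2 hbR) (sub_le_self R hb) (-m)
    push_cast at hreflected
    linear_combination 2 * hreflected

end Parabola

section Alternating

variable {ι : Type*} [Fintype ι] [LinearOrder ι]

/-- The sign vector on `D` whose signs alternate, with `1` at the largest index; this is encoded by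
tail sums taking only the values `0` and `1`. -/
structure IsAlternating (D : Finset ι) (e : ι → ℝ) : Prop extends IsSignVector D e where
  tailSum_eq : ∀ k, tailSum e k = 0 ∨ tailSum e k = 1

lemma exists_isAlternating (D : Finset ι) : ∃ e, IsAlternating D e := by
  suffices ∃ e, IsSignVector D e ∧
      ∀ U : Finset ι, IsUpperSet (U : Set ι) → ∑ j ∈ U, e j = 0 ∨ ∑ j ∈ U, e j = 1 by
    obtain ⟨e, he, hupper⟩ := this
    refine ⟨e, he, fun k => hupper _ fun i j hij hi => ?_⟩
    simpa using (by simpa using hi : k ≤ i).trans hij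
  induction D using Finset.induction_on_min with
  | empty => exact ⟨0, ⟨by simp, by simp⟩, by simp⟩
  | insert a D ha ih =>
    obtain ⟨e, he, hupper⟩ := ih
    have htotal : ∑ j, e j = 0 ∨ ∑ j, e j = 1 := hupper univ (by simpa using isUpperSet_univ)
    refine ⟨Function.update e a (1 - 2 * ∑ j, e j), ⟨fun j hj => ?_, fun j hj => ?_⟩,
      fun U hU => ?_⟩
    · rcases eq_or_ne j a with rfl | hja
      · rcases htotal with h | h <;> norm_num [h]
      · simpa [hja] using he.eq_one_or_neg_one j (mem_of_mem_insert_of_ne hj hja)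
    · simp only [mem_insert, not_or] at hj
      simpa [hj.1] using he.eq_zero j hj.2
    · by_cases haU : a ∈ U
      · have hrest : ∑ j ∈ U \ {a}, e j = ∑ j, e j := by
          refine sum_subset (subset_univ _) fun j _ hj => he.eq_zero j fun hjD => hj ?_
          simpa [(ha j hjD).ne'] using hU (ha j hjD).le haU
        rw [sum_update_of_mem haU, hrest]
        rcases htotal with h | h <;> norm_num [h]
      · rw [sum_update_of_notMem haU]
        exact hupper U hU

variable {D : Finset ι} {e : ι → ℝ}

lemma IsAlternating.eq_one_of_isGreatest (he : IsAlternating D e) {t : ι}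
    (ht : IsGreatest (D : Set ι) t) : e t = 1 := by
  have htail : tailSum e t = e t := by
    refine sum_eq_single_of_mem t (by simp) fun j hj hjt => he.eq_zero j fun hjD => hjt ?_
    exact (ht.2 hjD).antisymm (by simpa using hj)
  rcases he.eq_one_or_neg_one t ht.1 with h | h
  · exact h
  · have htail_mem := he.tailSum_eq t
    norm_num [htail, h] at htail_mem

lemma IsAlternating.single_sub {t : ι} (he : IsAlternating D e)
    (ht : IsGreatest (D : Set ι) t) : IsSignVector D (Pi.single t 2 - e) where
  eq_one_or_neg_one j hj := by
    rcases eq_or_ne j t with rfl | hjt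
    · norm_num [he.eq_one_of_isGreatest ht]
    · simpa [hjt] using he.neg.eq_one_or_neg_one j hj
  eq_zero j hj := by
    have hjt : j ≠ t := fun h => hj (h ▸ ht.1)
    simp [hjt, he.eq_zero j hj]

lemma tailSum_modEq_two {e e' : ι → ℝ} (h : ∀ j, e j ≡ e' j [PMOD 2]) (k : ι) :
    tailSum e k ≡ tailSum e' k [PMOD 2] :=
  sum_hom_rel AddCommGroup.modEq_rfl fun j _ _ hsum => (h j).add hsum

variable [PredOrder ι]

lemma energy_eq_sum_increment {r : ι → ℝ} (hr : Monotone r) (z e : ι → ℝ) :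
    energy r z e =
      ∑ k, (increment z k * tailSum e k - increment r k * tailSum e k ^ 2 / 2) := by
  rw [energy, dotProduct_eq_sum_increment, dotProduct_minKernel_mulVec hr, sum_sub_distrib, sum_div]

lemma IsAlternating.energy_le {r z e' : ι → ℝ} (he : IsAlternating D e) (hr : Monotone r)
    (hz : 0 ≤ increment z) (hzr : increment z ≤ increment r) (h : ∀ j, e' j ≡ e j [PMOD 2]) :
    energy r z e' ≤ energy r z e := by
  simp only [energy_eq_sum_increment hr]
  exact sum_le_sum fun k _ =>
    parabola_le_of_modEq_two (hz k) (hzr k) (tailSum_modEq_two h k) (he.tailSum_eq k)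

lemma IsAlternating.energy_mono {r z z' : ι → ℝ} (he : IsAlternating D e)
    (hz : increment z ≤ increment z') : energy r z e ≤ energy r z' e := by
  simp only [energy, dotProduct_eq_sum_increment]
  gcongr with k
  · rcases he.tailSum_eq k with h | h <;> simp [h]
  · exact hz k

lemma IsAlternating.energy_add_le {r d e' : ι → ℝ} {L : ℝ} (he : IsAlternating D e)
    (he' : IsSignVector D e') (hr : Monotone r) (hrd : 0 ≤ increment (r - d))
    (hd : 0 ≤ increment d) (hL : 0 ≤ L) (hdL : ∀ j, d j ≤ L) :
    energy r (r + d) e' - 2 * L ≤ energy r (r - d) e := by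
  rcases D.eq_empty_or_nonempty with rfl | hD
  · have hzero {u : ι → ℝ} (hu : IsSignVector ∅ u) : u = 0 :=
      funext fun j => hu.eq_zero j (by simp)
    simpa [hzero he', hzero he.toIsSignVector, energy] using hL
  obtain ⟨t, ht⟩ : ∃ t, IsGreatest (D : Set ι) t := ⟨_, D.isGreatest_max' hD⟩
  have hreflect := energy_single_sub (r := r) he' (fun j hj => hr (ht.2 hj)) (-d)
  have hparity (j : ι) : (Pi.single t 2 - e' : ι → ℝ) j ≡ e j [PMOD 2] := by
    have hsingle : (Pi.single t 2 : ι → ℝ) j ≡ 0 [PMOD 2] := by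
      rcases eq_or_ne j t with rfl | hjt <;> simp [*]
    simpa [sub_eq_add_neg] using hsingle.add (he'.neg.modEq_two he.toIsSignVector j)
  have hopt := he.energy_le hr hrd (by simpa using hd) hparity
  simp only [sub_neg_eq_add, ← sub_eq_add_neg, Pi.neg_apply] at hreflect
  linarith [hdL t]

end Alternating

section Bilinear

variable {N : ℕ} {d q r : Fin N → ℝ} {L : ℝ}

lemma typeII_add_typeII_le_max (hr : 0 ≤ r) (hrmono : Monotone r)
    (hrd : 0 ≤ increment (r - d)) (hd : Monotone d) (hd0 : 0 ≤ d)
    (hdq : ∀ j, d j = L ∨ q j = 0) (x : Fin N → ℝ) :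
    typeII r (x + r - d) + typeII r x ≤
      max (typeII r (x + r - d - q) + typeII r (x + q))
        (typeII r (x + r) + typeII r (x - d) - 2 * L) := by
  obtain ⟨D, e, he, hsector⟩ := exists_sector hr (x + r - d) x
  obtain ⟨e₀, he₀⟩ := exists_isAlternating D
  have hopt : energy r (x + r - d - x) e ≤ energy r (r - d) e₀ := by
    rw [show x + r - d - x = r - d by abel]
    exact he₀.energy_le hrmono hrd (by simpa using increment_nonneg hd hd0)
      (he.modEq_two he₀.toIsSignVector)
  by_cases hq : ∀ j ∈ D, q j = 0
  · have hqe : q ⬝ᵥ e₀ = 0 := sum_eq_zero fun j _ => by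
      by_cases hj : j ∈ D
      · simp [hq j hj]
      · simp [he₀.eq_zero j hj]
    have henergy : energy r (x + r - d - q - (x + q)) e₀ = energy r (r - d) e₀ := by
      rw [show x + r - d - q - (x + q) = r - d - q - q by abel]
      simp only [energy, sub_dotProduct, hqe, sub_zero]
    have hcompare := hsector (x + r - d - q) (x + q) e₀ (by abel) he₀.toIsSignVector
    exact le_max_of_le_left (by linarith)
  · push Not at hq
    obtain ⟨j, hj, hqj⟩ := hq
    obtain ⟨t, ht⟩ : ∃ t, IsGreatest (D : Set (Fin N)) t := ⟨_, D.isGreatest_max' ⟨j, hj⟩⟩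
    have hLt : L ≤ d t := ((hdq j).resolve_right hqj).symm.trans_le (hd (ht.2 hj))
    have henergy : energy r (x + r - (x - d)) (Pi.single t 2 - e₀) =
        energy r (r - d) e₀ + 2 * d t := by
      rw [show x + r - (x - d) = r + d by abel]
      exact energy_single_sub (r := r) he₀.toIsSignVector (fun j hj => hrmono (ht.2 hj)) d
    have hcompare := hsector (x + r) (x - d) _ (by abel) (he₀.single_sub ht)
    exact le_max_of_le_right (by linarith)

lemma typeII_add_typeII_sub_le (hr : 0 ≤ r) (hrmono : Monotone r)
    (hrd : 0 ≤ increment (r - d)) (hd : 0 ≤ increment d) (hL : 0 ≤ L) (hdL : ∀ j, d j ≤ L)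
    (x : Fin N → ℝ) :
    typeII r (x + r) + typeII r (x - d) - 2 * L ≤ typeII r (x + r - d) + typeII r x := by
  obtain ⟨D, e, he, hsector⟩ := exists_sector hr (x + r) (x - d)
  obtain ⟨e₀, he₀⟩ := exists_isAlternating D
  have hcompare := hsector (x + r - d) x e₀ (by abel) he₀.toIsSignVector
  have hopt := he₀.energy_add_le he hrmono hrd hd hL hdL
  rw [show x + r - d - x = r - d by abel, show x + r - (x - d) = r + d by abel] at hcompare
  linarith

lemma typeII_add_typeII_le (hr : 0 ≤ r) (hrmono : Monotone r)
    (hd : 0 ≤ increment d) (hq : 0 ≤ increment q) (hdq : 0 ≤ increment (r - d - q - q))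
    (x : Fin N → ℝ) :
    typeII r (x + r - d - q) + typeII r (x + q) ≤ typeII r (x + r - d) + typeII r x := by
  obtain ⟨D, e, he, hsector⟩ := exists_sector hr (x + r - d - q) (x + q)
  obtain ⟨e₀, he₀⟩ := exists_isAlternating D
  have hcompare := hsector (x + r - d) x e₀ (by abel) he₀.toIsSignVector
  have hqle : increment (r - d - q - q) ≤ increment (r - d) := by
    simp only [map_sub _ _ q]
    exact (sub_le_self _ hq).trans (sub_le_self _ hq)
  have hdle : increment (r - d) ≤ increment r := by
    rw [map_sub]
    exact sub_le_self _ hd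
  have hopt := he₀.energy_le hrmono hdq (hqle.trans hdle) (he.modEq_two he₀.toIsSignVector)
  have hmono := he₀.energy_mono (r := r) hqle
  rw [show x + r - d - x = r - d by abel,
    show x + r - d - q - (x + q) = r - d - q - q by abel] at hcompare
  linarith

lemma typeII_add_typeII_eq_max (hd : Monotone d) (hd0 : 0 ≤ d) (hq : Monotone q) (hq0 : 0 ≤ q)
    (hr : Monotone (r - d - q - q)) (hr0 : 0 ≤ r - d - q - q) (hL : 0 ≤ L)
    (hdL : ∀ j, d j ≤ L) (hdq : ∀ j, d j = L ∨ q j = 0) (x : Fin N → ℝ) :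
    typeII r (x + r - d) + typeII r x =
      max (typeII r (x + r - d - q) + typeII r (x + q))
        (typeII r (x + r) + typeII r (x - d) - 2 * L) := by
  have hrd_mono : Monotone (r - d - q - q + q + q) := (hr.add hq).add hq
  have hrd_nonneg : 0 ≤ r - d - q - q + q + q := add_nonneg (add_nonneg hr0 hq0) hq0
  rw [sub_add_cancel, sub_add_cancel] at hrd_mono hrd_nonneg
  have hrmono : Monotone (r - d + d) := hrd_mono.add hd
  have hrnonneg : 0 ≤ r - d + d := add_nonneg hrd_nonneg hd0
  rw [sub_add_cancel] at hrmono hrnonneg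
  have hdi := increment_nonneg hd hd0
  have hqi := increment_nonneg hq hq0
  have hrd := increment_nonneg hrd_mono hrd_nonneg
  refine le_antisymm (typeII_add_typeII_le_max hrnonneg hrmono hrd hd hd0 hdq x) (max_le ?_ ?_)
  · exact typeII_add_typeII_le hrnonneg hrmono hdi hqi (increment_nonneg hr hr0) x
  · exact typeII_add_typeII_sub_le hrnonneg hrmono hrd hdi hL hdL x

theorem typeII_bilinear_of_monotone {p : Fin N → ℝ} {k l : ℝ} (hp : Monotone p)
    (hp0 : ∀ j, 0 ≤ p j) (hL : 0 ≤ L) (hk : 1 ≤ k) (hkl : 2 ≤ k + l)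
    (hq : ∀ j, q j = max 0 (p j - L)) (hr : ∀ j, r j = k * p j + l * q j) (x : Fin N → ℝ) :
    typeII r (x + r - (p - q)) + typeII r x =
      max (typeII r (x + r - p) + typeII r (x + q))
        (typeII r (x + r) + typeII r (x - (p - q)) - 2 * L) := by
  have hd (j : Fin N) : (p - q) j = min (p j) L := by
    rw [Pi.sub_apply, hq]
    grind
  have hdmono : Monotone (p - q) := by
    simpa only [funext hd] using hp.min monotone_const
  have hqmono : Monotone q := by
    simpa only [funext hq] using monotone_const.max fun i j hij => sub_le_sub_right (hp hij) L
  have hd0 : 0 ≤ p - q := fun j => (le_min (hp0 j) hL).trans_eq (hd j).symm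
  have hq0 : 0 ≤ q := fun j => (le_max_left _ _).trans_eq (hq j).symm
  have hrest : r - (p - q) - q - q = (k - 1) • (p - q) + (k + l - 2) • q := by
    ext j
    simp only [Pi.add_apply, Pi.sub_apply, Pi.smul_apply, smul_eq_mul, hr]
    ring
  have hk' := sub_nonneg.2 hk
  have hkl' := sub_nonneg.2 hkl
  have h := typeII_add_typeII_eq_max hdmono hd0 hqmono hq0
    (hrest ▸ (hdmono.const_smul hk').add (hqmono.const_smul hkl'))
    (hrest ▸ add_nonneg (smul_nonneg hk' hd0) (smul_nonneg hkl' hq0)) hL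
    (fun j => (hd j).trans_le (min_le_right _ _)) (fun j => by rw [hd, hq]; grind) x
  rwa [show x + r - (p - q) - q = x + r - p by abel] at h

theorem typeII_bilinear {p : Fin N → ℝ} {k l : ℝ}
    (hp0 : ∀ j, 0 ≤ p j) (hL : 0 ≤ L) (hk : 1 ≤ k) (hkl : 2 ≤ k + l)
    (hq : ∀ j, q j = max 0 (p j - L)) (hr : ∀ j, r j = k * p j + l * q j) (x : Fin N → ℝ) :
    typeII r (x + r - (p - q)) + typeII r x =
      max (typeII r (x + r - p) + typeII r (x + q))
        (typeII r (x + r) + typeII r (x - (p - q)) - 2 * L) := by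
  obtain ⟨ρ, hρ⟩ : ∃ ρ : Equiv.Perm (Fin N), Monotone (p ∘ ρ) := ⟨_, Tuple.monotone_sort p⟩
  have h := typeII_bilinear_of_monotone (q := q ∘ ρ) (r := r ∘ ρ) hρ
    (fun j => hp0 (ρ j)) hL hk hkl (fun j => hq (ρ j)) (fun j => hr (ρ j)) (x ∘ ρ)
  simpa only [← Pi.add_comp, ← Pi.sub_comp, typeII_comp] using h

end Bilinear

end UltradiscreteToda

open UltradiscreteToda in
theorem utoda_type_bilinear_typeII_general (N : ℕ) (p c : Fin N → ℝ)
    (L k l : ℝ) (hp0 : ∀ j, 0 ≤ p j) (hL : 0 ≤ L) (hk : 1 ≤ k) (hkl : 2 ≤ k + l)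
    (q r : Fin N → ℝ)
    (hq : ∀ j, q j = max 0 (p j - L))
    (hr : ∀ j, r j = k * p j + l * q j)
    (f : ℝ → ℝ → ℝ)
    (hf : ∀ n i : ℝ, f n i = uperm N fun j m =>
      |(p j * n - q j * i + c j) + (2 * ((m : ℕ) : ℝ) - (N : ℝ) + 1) * r j / 2|) :
    ∀ n i : ℝ,
      f n i + f (n + k - 1) (i - l - 1) =
        max (f (n + k - 1) (i - l) + f n (i - 1))
            (f (n + k) (i - l) + f (n - 1) (i - 1) - 2 * L) := by
  intro n i
  set x : ℝ → ℝ → Fin N → ℝ := fun n i j => p j * n - q j * i + c j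
  have hf (n i : ℝ) : f n i = typeII r (x n i) := hf n i
  obtain ⟨h₁, h₂, h₃, h₄, h₅⟩ :
      x (n + k - 1) (i - l - 1) = x n i + r - (p - q) ∧ x (n + k - 1) (i - l) = x n i + r - p ∧
      x n (i - 1) = x n i + q ∧ x (n + k) (i - l) = x n i + r ∧
      x (n - 1) (i - 1) = x n i - (p - q) := by
    refine ⟨?_, ?_, ?_, ?_, ?_⟩ <;> ext j <;> simp only [x, Pi.add_apply, Pi.sub_apply, hr] <;> ring
  rw [add_comm (f n i)]
  simpa only [hf, h₁, h₂, h₃, h₄, h₅] using typeII_bilinear hp0 hL hk hkl hq hr (x n i)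

theorem utoda_type_bilinear_typeII (N : ℕ) (hN : 1 ≤ N) (p c : Fin N → ℝ)
    (L k l : ℝ) (hp0 : ∀ j, 0 ≤ p j) (hpmono : Monotone p)
    (hL : 0 ≤ L) (hk : 1 ≤ k) (hl : 1 ≤ l)
    (q r : Fin N → ℝ)
    (hq : ∀ j, q j = max 0 (p j - L))
    (hr : ∀ j, r j = k * p j + l * q j)
    (f : ℝ → ℝ → ℝ)
    (hf : ∀ n i : ℝ, f n i = uperm N fun j m =>
      |(p j * n - q j * i + c j) + (2 * ((m : ℕ) : ℝ) - (N : ℝ) + 1) * r j / 2|) :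
    ∀ n i : ℝ,
      f n i + f (n + k - 1) (i - l - 1) =
        max (f (n + k - 1) (i - l) + f n (i - 1))
            (f (n + k) (i - l) + f (n - 1) (i - 1) - 2 * L) :=
  utoda_type_bilinear_typeII_general N p c L k l hp0 hL hk (by linarith) q r hq hr f hf
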